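/- Assume the characteristic of F is not 2 and that K is a finite separable extension of F with field norm N_{K/F} : K → F. Let c, c' ∈ K be nonzero, let σ₁,σ₂,σ₃,σ₄ and φ₁,φ₂,φ₃,φ₄ be F-algebra automorphisms of K, and suppose there exists an F-algebra isomorphism G from Cay(K,c,σ₁,σ₂,σ₃,σ₄) to Cay(K,c',φ₁,φ₂,φ₃,φ₄) (bijective, F-linear, multiplicative for the respective multiplications) that restricts to an F-algebra automorphism g of K, i.e., G(x,0) = (g(x),0) for all x ∈ K. Then there exists b ∈ K with b ≠ 0 such that N_{K/F}(c) = N_{K/F}(c')·N_{K/F}(b)², i.e., N_{K/F}(c·c'⁻¹) is the square of a norm from K. -/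

import Mathlib

/-- Multiplication of the generalized Cayley–Dickson double
`Cay(K, c, σ₁, σ₂, σ₃, σ₄)`:
`(u,v)·(x,y) = (u·x + c·σ₁(v)·σ₂(y), σ₃(u)·y + v·σ₄(x))`. -/
def cayMul {R : Type*} [Ring R] (c : R) (σ₁ σ₂ σ₃ σ₄ : R → R) :
    R × R → R × R → R × R :=
  fun p q => (p.1 * q.1 + c * σ₁ p.2 * σ₂ q.2, σ₃ p.1 * q.2 + p.2 * σ₄ q.1)

/-!
Write `G (0, 1) = (a, b)`. If `a ≠ 0`, comparing the images of `(z, 0) · (0, 1)` and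
`(0, 1) · (z, 0)` forces `σ₃ = σ₄` and then `φ₃ = φ₄`, so that `(a, b)²` has second component
`2 φ₃(a) b ≠ 0`, although `(0, 1)² = (c, 0)` maps to `(g c, 0)`. Hence `a = 0`, and the first
component of the same square gives `g c = c' φ₁(b) φ₂(b)`. The norm is invariant under
automorphisms, so taking norms concludes.
-/

section CayMul

variable {S E : Type*} [Ring S] [FunLike E S S] [RingHomClass E S S]

theorem cayMul_inl_inr (c : S) (σ₁ σ₂ σ₃ σ₄ : E) (u y : S) :
    cayMul c σ₁ σ₂ σ₃ σ₄ (u, 0) (0, y) = (0, σ₃ u * y) := by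
  simp [cayMul]

theorem cayMul_inr_inl (c : S) (σ₁ σ₂ σ₃ σ₄ : E) (v x : S) :
    cayMul c σ₁ σ₂ σ₃ σ₄ (0, v) (x, 0) = (0, v * σ₄ x) := by
  simp [cayMul]

theorem cayMul_inr_inr (c : S) (σ₁ σ₂ σ₃ σ₄ : E) (v y : S) :
    cayMul c σ₁ σ₂ σ₃ σ₄ (0, v) (0, y) = (c * σ₁ v * σ₂ y, 0) := by
  simp [cayMul]

end CayMul

/-- `G` is a multiplicative map from `Cay(S, c, σ₁, σ₂, σ₃, σ₄)` to `Cay(S, c', φ₁, φ₂, φ₃, φ₄)`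
that restricts to `g` on the first summand; additivity is not part of the notion. -/
structure IsCayExtension {S : Type*} [Ring S] (c : S) (σ₁ σ₂ σ₃ σ₄ : S → S)
    (c' : S) (φ₁ φ₂ φ₃ φ₄ : S → S) (g : S → S) (G : S × S → S × S) : Prop where
  map_mul (p q : S × S) :
    G (cayMul c σ₁ σ₂ σ₃ σ₄ p q) = cayMul c' φ₁ φ₂ φ₃ φ₄ (G p) (G q)
  map_inl (x : S) : G (x, 0) = (g x, 0)

namespace IsCayExtension

section Ring

variable {S E E' : Type*} [Ring S] [FunLike E S S] [RingHomClass E S S]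
  [FunLike E' S S] [RingHomClass E' S S]
  {c c' : S} {g : S → S} {G : S × S → S × S}

theorem injective_restriction {σ₁ σ₂ σ₃ σ₄ φ₁ φ₂ φ₃ φ₄ : S → S}
    (h : IsCayExtension c σ₁ σ₂ σ₃ σ₄ c' φ₁ φ₂ φ₃ φ₄ g G) (hG : Function.Injective G) :
    Function.Injective g := by
  intro x y hxy
  have hinl : G (x, 0) = G (y, 0) := by rw [h.map_inl, h.map_inl, hxy]
  exact congrArg Prod.fst (hG hinl)

theorem snd_map_inr_one_ne_zero [Nontrivial S] {σ₁ σ₂ σ₃ σ₄ φ₁ φ₂ φ₃ φ₄ : S → S}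
    (h : IsCayExtension c σ₁ σ₂ σ₃ σ₄ c' φ₁ φ₂ φ₃ φ₄ g G) (hG : Function.Injective G)
    (hg : Function.Surjective g) : (G (0, 1)).2 ≠ 0 := by
  intro hb
  obtain ⟨x, hx⟩ := hg (G (0, 1)).1
  have hinl : G (0, 1) = G (x, 0) := by
    rw [h.map_inl, hx]
    exact Prod.ext rfl hb
  exact one_ne_zero (congrArg Prod.snd (hG hinl))

variable {σ₁ σ₂ σ₃ σ₄ : E} {φ₁ φ₂ φ₃ φ₄ : E'}

theorem map_inr_left_twist (h : IsCayExtension c σ₁ σ₂ σ₃ σ₄ c' φ₁ φ₂ φ₃ φ₄ g G) (z : S) :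
    G (0, σ₃ z) = (g z * (G (0, 1)).1, φ₃ (g z) * (G (0, 1)).2) := by
  have hmul := h.map_mul (z, 0) (0, 1)
  rw [cayMul_inl_inr, mul_one, h.map_inl] at hmul
  simpa [cayMul] using hmul

theorem map_inr_right_twist (h : IsCayExtension c σ₁ σ₂ σ₃ σ₄ c' φ₁ φ₂ φ₃ φ₄ g G) (z : S) :
    G (0, σ₄ z) = ((G (0, 1)).1 * g z, (G (0, 1)).2 * φ₄ (g z)) := by
  have hmul := h.map_mul (0, 1) (z, 0)
  rw [cayMul_inr_inl, one_mul, h.map_inl] at hmul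
  simpa [cayMul] using hmul

theorem cayMul_map_inr_one_self {φ₁ φ₂ φ₃ φ₄ : S → S}
    (h : IsCayExtension c σ₁ σ₂ σ₃ σ₄ c' φ₁ φ₂ φ₃ φ₄ g G) :
    cayMul c' φ₁ φ₂ φ₃ φ₄ (G (0, 1)) (G (0, 1)) = (g c, 0) := by
  rw [← h.map_mul, cayMul_inr_inr, map_one, map_one, mul_one, mul_one, h.map_inl]

end Ring

section IsDomain

variable {S E E' : Type*} [CommRing S] [IsDomain S] [FunLike E S S] [RingHomClass E S S]
  [FunLike E' S S] [RingHomClass E' S S]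
  {c c' : S} {g : S → S} {G : S × S → S × S} {σ₁ σ₂ σ₃ σ₄ : E} {φ₁ φ₂ φ₃ φ₄ : E'}

theorem source_twists_eq_of_fst_ne_zero
    (h : IsCayExtension c σ₁ σ₂ σ₃ σ₄ c' φ₁ φ₂ φ₃ φ₄ g G) (hg : Function.Injective g)
    (hσ₄ : Function.Surjective σ₄) (ha : (G (0, 1)).1 ≠ 0) (z : S) : σ₃ z = σ₄ z := by
  obtain ⟨w, hw⟩ := hσ₄ (σ₃ z)
  have himage : (G (0, 1)).1 * g w = (G (0, 1)).1 * g z :=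
    calc (G (0, 1)).1 * g w = (G (0, σ₄ w)).1 := by rw [h.map_inr_right_twist]
      _ = g z * (G (0, 1)).1 := by rw [hw, h.map_inr_left_twist]
      _ = (G (0, 1)).1 * g z := mul_comm _ _
  rw [← hw, hg (mul_left_cancel₀ ha himage)]

theorem target_twists_eq_of_source_twists_eq
    (h : IsCayExtension c σ₁ σ₂ σ₃ σ₄ c' φ₁ φ₂ φ₃ φ₄ g G) (hg : Function.Surjective g)
    (hb : (G (0, 1)).2 ≠ 0) (hσ : ∀ z, σ₃ z = σ₄ z) (x : S) : φ₃ x = φ₄ x := by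
  obtain ⟨z, rfl⟩ := hg x
  have himage : φ₃ (g z) * (G (0, 1)).2 = φ₄ (g z) * (G (0, 1)).2 :=
    calc φ₃ (g z) * (G (0, 1)).2 = (G (0, σ₃ z)).2 := by rw [h.map_inr_left_twist]
      _ = (G (0, 1)).2 * φ₄ (g z) := by rw [hσ, h.map_inr_right_twist]
      _ = φ₄ (g z) * (G (0, 1)).2 := mul_comm _ _
  exact mul_right_cancel₀ hb himage

theorem fst_map_inr_one_eq_zero (h : IsCayExtension c σ₁ σ₂ σ₃ σ₄ c' φ₁ φ₂ φ₃ φ₄ g G)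
    (h2 : (2 : S) ≠ 0) (hG : Function.Injective G) (hg : Function.Surjective g)
    (hσ₄ : Function.Surjective σ₄) (hφ₃ : Function.Injective φ₃) : (G (0, 1)).1 = 0 := by
  by_contra ha
  have hb := h.snd_map_inr_one_ne_zero hG hg
  have hσ := h.source_twists_eq_of_fst_ne_zero (h.injective_restriction hG) hσ₄ ha
  have hφ := h.target_twists_eq_of_source_twists_eq hg hb hσ (G (0, 1)).1
  have hsq : φ₃ (G (0, 1)).1 * (G (0, 1)).2 + (G (0, 1)).2 * φ₄ (G (0, 1)).1 = 0 :=
    congrArg Prod.snd h.cayMul_map_inr_one_self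
  have hdouble : 2 * (φ₃ (G (0, 1)).1 * (G (0, 1)).2) = 0 := by
    rw [← hφ] at hsq
    linear_combination hsq
  exact mul_ne_zero h2 (mul_ne_zero ((map_ne_zero_iff φ₃ hφ₃).mpr ha) hb) hdouble

theorem map_const_eq (h : IsCayExtension c σ₁ σ₂ σ₃ σ₄ c' φ₁ φ₂ φ₃ φ₄ g G)
    (h2 : (2 : S) ≠ 0) (hG : Function.Injective G) (hg : Function.Surjective g)
    (hσ₄ : Function.Surjective σ₄) (hφ₃ : Function.Injective φ₃) :
    g c = c' * φ₁ (G (0, 1)).2 * φ₂ (G (0, 1)).2 := by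
  have hsq : (G (0, 1)).1 * (G (0, 1)).1 + c' * φ₁ (G (0, 1)).2 * φ₂ (G (0, 1)).2 = g c :=
    congrArg Prod.fst h.cayMul_map_inr_one_self
  rw [← hsq, h.fst_map_inr_one_eq_zero h2 hG hg hσ₄ hφ₃, mul_zero, zero_add]

end IsDomain

end IsCayExtension

theorem cay_field_isomorphism_norm_condition_general
    {R S : Type*} [CommRing R] [CommRing S] [IsDomain S] [Algebra R S]
    [Module.Free R S] [Module.Finite R S] (h2 : (2 : S) ≠ 0)
    (σ₁ σ₂ σ₃ σ₄ φ₁ φ₂ φ₃ φ₄ : S ≃ₐ[R] S) (c c' : S)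
    (G : S × S → S × S) (hGinj : Function.Injective G)
    (hGmul : ∀ p q : S × S,
      G (cayMul c σ₁ σ₂ σ₃ σ₄ p q) = cayMul c' φ₁ φ₂ φ₃ φ₄ (G p) (G q))
    (g : S ≃ₐ[R] S) (hGg : ∀ x : S, G (x, 0) = (g x, 0)) :
    ∃ b : S, b ≠ 0 ∧ Algebra.norm R c = Algebra.norm R c' * (Algebra.norm R b) ^ 2 := by
  have h : IsCayExtension c σ₁ σ₂ σ₃ σ₄ c' φ₁ φ₂ φ₃ φ₄ g G := ⟨hGmul, hGg⟩
  set b := (G (0, 1)).2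
  refine ⟨b, h.snd_map_inr_one_ne_zero hGinj g.surjective, ?_⟩
  have hgc : g c = c' * φ₁ b * φ₂ b :=
    h.map_const_eq h2 hGinj g.surjective σ₄.surjective φ₃.injective
  calc Algebra.norm R c
      = Algebra.norm R (g c) := (Algebra.norm_eq_of_algEquiv g c).symm
    _ = Algebra.norm R c' * Algebra.norm R b * Algebra.norm R b := by
      rw [hgc, map_mul, map_mul, Algebra.norm_eq_of_algEquiv, Algebra.norm_eq_of_algEquiv]
    _ = Algebra.norm R c' * (Algebra.norm R b) ^ 2 := by rw [mul_assoc, ← sq]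

/-- If `char F ≠ 2`, `K/F` is finite separable, and there is an
`F`-algebra isomorphism `Cay(K,c,σ₁,σ₂,σ₃,σ₄) → Cay(K,c',φ₁,φ₂,φ₃,φ₄)` restricting
to an `F`-automorphism `g` of `K`, then `N_{K/F}(c) = N_{K/F}(c')·N_{K/F}(b)²` for
some `b ≠ 0`. -/
theorem cay_field_isomorphism_norm_condition
    {F K : Type*} [Field F] [Field K] [Algebra F K]
    [FiniteDimensional F K] [Algebra.IsSeparable F K]
    (hF : (2 : F) ≠ 0)
    (σ₁ σ₂ σ₃ σ₄ φ₁ φ₂ φ₃ φ₄ : K ≃ₐ[F] K) (c c' : K) (hc : c ≠ 0) (hc' : c' ≠ 0)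
    (G : K × K → K × K)
    (hGbij : Function.Bijective G)
    (hGadd : ∀ p q : K × K, G (p + q) = G p + G q)
    (hGsmul : ∀ (α : F) (p : K × K), G (α • p) = α • G p)
    (hGmul : ∀ p q : K × K,
      G (cayMul c σ₁ σ₂ σ₃ σ₄ p q) = cayMul c' φ₁ φ₂ φ₃ φ₄ (G p) (G q))
    (g : K ≃ₐ[F] K) (hGg : ∀ x : K, G (x, 0) = (g x, 0)) :
    ∃ b : K, b ≠ 0 ∧
      Algebra.norm F c = Algebra.norm F c' * (Algebra.norm F b) ^ 2 := by
  have h2 : (2 : K) ≠ 0 := map_ofNat (algebraMap F K) 2 ▸ (map_ne_zero _).mpr hF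
  exact cay_field_isomorphism_norm_condition_general h2 σ₁ σ₂ σ₃ σ₄ φ₁ φ₂ φ₃ φ₄ c c' G
    hGbij.injective hGmul g hGg
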